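/- For j ∈ {0,1} and every τ in the complex upper half plane, g_{4,j}(τ)² = E_{4,2}(τ) − (−1)ʲ·8·(η(τ)η(4τ)/η(2τ))⁴; moreover g_{4,0}(τ)·g_{4,1}(τ) = E'_{4,2}(τ), and g_{4,j}(−1/(4τ)) = (−1)ʲ·2i·τ·g_{4,j}(τ). -/

import Mathlib

open Complex

/-- `q = exp(2πiτ)`. -/
noncomputable def qq (τ : ℂ) : ℂ := Complex.exp (2 * Real.pi * Complex.I * τ)

/-- `σ_k(n) = Σ_{d ∣ n} d^k`, as a complex number. -/
noncomputable def sigmaC (k n : ℕ) : ℂ := ∑ d ∈ n.divisors, (d : ℂ) ^ k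

/-- Eisenstein series `E₂(τ) = 1 - 24 Σ_{n≥1} σ₁(n) qⁿ`. -/
noncomputable def E₂ (τ : ℂ) : ℂ := 1 - 24 * ∑' n : ℕ, sigmaC 1 (n + 1) * qq τ ^ (n + 1)

/-- Eisenstein series `E₄(τ) = 1 + 240 Σ_{n≥1} σ₃(n) qⁿ`. -/
noncomputable def E₄ (τ : ℂ) : ℂ := 1 + 240 * ∑' n : ℕ, sigmaC 3 (n + 1) * qq τ ^ (n + 1)

/-- Eisenstein series `E₆(τ) = 1 - 504 Σ_{n≥1} σ₅(n) qⁿ`. -/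
noncomputable def E₆ (τ : ℂ) : ℂ := 1 - 504 * ∑' n : ℕ, sigmaC 5 (n + 1) * qq τ ^ (n + 1)

/-- Dedekind eta function `η(τ) = exp(πiτ/12) ∏_{n≥1} (1 - qⁿ)`. -/
noncomputable def η (τ : ℂ) : ℂ :=
  Complex.exp (Real.pi * Complex.I * τ / 12) * ∏' n : ℕ, (1 - qq τ ^ (n + 1))

/-- Theta function `θ(τ) = Σ_{n ∈ ℤ} q^{n²}`. -/
noncomputable def θ (τ : ℂ) : ℂ := ∑' n : ℤ, qq τ ^ (n ^ 2)

/-- The character `χ₋₄`: `χ₋₄(d) = 1, -1, 0` according as `d ≡ 1, 3, 0/2 (mod 4)`. -/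
noncomputable def χ₄ (d : ℕ) : ℂ := if d % 4 = 1 then 1 else if d % 4 = 3 then -1 else 0

/-- The character `χ₋₃`: `χ₋₃(d) = 1, -1, 0` according as `d ≡ 1, 2, 0 (mod 3)`. -/
noncomputable def χ₃ (d : ℕ) : ℂ := if d % 3 = 1 then 1 else if d % 3 = 2 then -1 else 0

/-- `E_{1,-4}(τ) = 1/4 + Σ_{n≥1} (Σ_{d∣n} χ₋₄(d)) qⁿ`. -/
noncomputable def E₁₄ (τ : ℂ) : ℂ :=
  1 / 4 + ∑' n : ℕ, (∑ d ∈ (n + 1).divisors, χ₄ d) * qq τ ^ (n + 1)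

/-- `E_{1,-3}(τ) = 1/6 + Σ_{n≥1} (Σ_{d∣n} χ₋₃(d)) qⁿ`. -/
noncomputable def E₁₃ (τ : ℂ) : ℂ :=
  1 / 6 + ∑' n : ℕ, (∑ d ∈ (n + 1).divisors, χ₃ d) * qq τ ^ (n + 1)

/-- `E_{2,2}(τ) = 2E₂(2τ) - E₂(τ)`. -/
noncomputable def E₂₂ (τ : ℂ) : ℂ := 2 * E₂ (2 * τ) - E₂ τ

/-- `E_{2,4}(τ) = (4E₄(2τ) - E₄(τ))/3`. -/
noncomputable def E₂₄ (τ : ℂ) : ℂ := (4 * E₄ (2 * τ) - E₄ τ) / 3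

/-- `E_{3,2}(τ) = (3E₂(3τ) - E₂(τ))/2`. -/
noncomputable def E₃₂ (τ : ℂ) : ℂ := (3 * E₂ (3 * τ) - E₂ τ) / 2

/-- `E_{3,4}(τ) = (9E₄(3τ) - E₄(τ))/8`. -/
noncomputable def E₃₄ (τ : ℂ) : ℂ := (9 * E₄ (3 * τ) - E₄ τ) / 8

/-- `E_{4,2}(τ) = (4E₂(4τ) - E₂(τ))/3`. -/
noncomputable def E₄₂ (τ : ℂ) : ℂ := (4 * E₂ (4 * τ) - E₂ τ) / 3

/-- `E'_{4,2}(τ) = 4E₂(4τ) - 4E₂(2τ) + E₂(τ)`. -/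
noncomputable def E₄₂' (τ : ℂ) : ℂ := 4 * E₂ (4 * τ) - 4 * E₂ (2 * τ) + E₂ τ

/-- `f_{1,j}(τ) = 2E₂(τ) - ((3+(-1)ʲi√3)/6)E₂(τ/2) - ((3-(-1)ʲi√3)/6)E₂((τ+1)/2)`. -/
noncomputable def f₁ (j : ℕ) (τ : ℂ) : ℂ :=
  2 * E₂ τ - ((3 + (-1 : ℂ) ^ j * Complex.I * Real.sqrt 3) / 6) * E₂ (τ / 2)
    - ((3 - (-1 : ℂ) ^ j * Complex.I * Real.sqrt 3) / 6) * E₂ ((τ + 1) / 2)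

/-- `g_{1,j}(τ) = (3/2)E₂(τ) - (1/4) Σ_{0≤m≤2, m≢j (mod 3)} E₂((τ+m)/3)`. -/
noncomputable def g₁ (j : ℕ) (τ : ℂ) : ℂ :=
  (3 / 2) * E₂ τ -
    (1 / 4) * ∑ m ∈ (Finset.range 3).filter (fun m => ¬ m % 3 = j % 3), E₂ ((τ + m) / 3)

/-- `f_{2,j}(τ) = 4E_{1,-4}(τ) + (-1)ʲ·2i·(E_{1,-4}(τ/2) - E_{1,-4}((τ+1)/2))`. -/
noncomputable def f₂ (j : ℕ) (τ : ℂ) : ℂ :=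
  4 * E₁₄ τ + (-1 : ℂ) ^ j * 2 * Complex.I * (E₁₄ (τ / 2) - E₁₄ ((τ + 1) / 2))

/-- `f_{3,j}(τ) = 6E_{1,-3}(2τ) + (-1)ʲ·i√3·(E_{1,-3}(τ/2) - E_{1,-3}((τ+1)/2))`. -/
noncomputable def f₃ (j : ℕ) (τ : ℂ) : ℂ :=
  6 * E₁₃ (2 * τ) +
    (-1 : ℂ) ^ j * Complex.I * Real.sqrt 3 * (E₁₃ (τ / 2) - E₁₃ ((τ + 1) / 2))

/-- `f_{4,j}(τ) = θ(τ/2 - (-1)ʲ/4)`. -/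
noncomputable def f₄ (j : ℕ) (τ : ℂ) : ℂ := θ (τ / 2 - (-1 : ℂ) ^ j / 4)

/-- `g_{4,j}(τ) = 2θ(2τ)² - θ((τ+j)/2)²`. -/
noncomputable def g₄ (j : ℕ) (τ : ℂ) : ℂ := 2 * θ (2 * τ) ^ 2 - θ ((τ + j) / 2) ^ 2

/-- `E_{3,-3,1}(τ) = -1/9 + Σ_{n≥1} (Σ_{d∣n} d²χ₋₃(d)) qⁿ`. -/
noncomputable def E₃₃₁ (τ : ℂ) : ℂ :=
  -(1 / 9) + ∑' n : ℕ, (∑ d ∈ (n + 1).divisors, (d : ℂ) ^ 2 * χ₃ d) * qq τ ^ (n + 1)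

/-- `E_{3,1,-3}(τ) = Σ_{n≥1} (Σ_{d∣n} d²χ₋₃(n/d)) qⁿ`. -/
noncomputable def E₃₁₃ (τ : ℂ) : ℂ :=
  ∑' n : ℕ, (∑ d ∈ (n + 1).divisors, (d : ℂ) ^ 2 * χ₃ ((n + 1) / d)) * qq τ ^ (n + 1)

/-
Let `θ₂, θ₃, θ₄` be the theta constants. By their behaviour under `τ ↦ τ + 1` and `τ ↦ -1/τ`, the
eighth power of `θ₂ θ₃ θ₄` is a cusp form of level one and weight 12, hence a multiple of `η²⁴`;
comparing leading terms gives `θ₂ θ₃ θ₄ = 2η³`. With the duplication formulas this writes each theta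
constant as an eta quotient, so that logarithmic derivatives of quotients of theta constants are
combinations of `E₂(τ)`, `E₂(2τ)` and `E₂(4τ)`.

On the other hand, the Landen transformation `r(τ)² = 2 r(2τ) / (1 + r(2τ)²)` of `r = θ₂ / θ₃`
makes `(r' / r) / θ₄⁴` invariant under `τ ↦ 2τ`. Its limit at `i∞` is `πi/4`, so
`r' / r = (πi/4) θ₄⁴`, and the translate by `1` reads `(θ₂ / θ₄)' / (θ₂ / θ₄) = (πi/4) θ₃⁴`. This
evaluates `θ₃⁴` and `θ₄⁴`, and the identities follow from
`g_{4,j}(τ) = θ₄(2τ)² - (-1)ʲ θ₂(2τ)²` and `θ₃⁴ = θ₂⁴ + θ₄⁴`.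
-/

open Filter Topology

local notation "I∞" => comap im atTop

section General

theorem neg_one_pow_sq (R : Type*) [Monoid R] [HasDistribNeg R] (n : ℕ) :
    ((-1 : R) ^ n) ^ 2 = 1 := by
  rw [pow_right_comm, neg_one_sq, one_pow]

theorem eqOn_of_pow_eqOn_of_tendsto_div {X K : Type*} [TopologicalSpace X] [Field K]
    [TopologicalSpace K] [ContinuousMul K] [ContinuousInv₀ K] [T2Space K] {s : Set X}
    {f g : X → K} {n : ℕ} {l : Filter X} [l.NeBot] (hs : IsPreconnected s)
    (hf : ContinuousOn f s) (hg : ContinuousOn g s) (hg₀ : ∀ x ∈ s, g x ≠ 0) (hn : n ≠ 0)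
    (hfg : s.EqOn (f ^ n) (g ^ n)) (hl : s ∈ l) (hlim : Tendsto (f / g) l (𝓝 1)) :
    s.EqOn f g := by
  intro x hx
  have hfinite : {y : K | y ^ n = 1}.Finite := (Multiset.finite_toSet
    (Polynomial.nthRoots n 1)).subset fun y ↦ (Polynomial.mem_nthRoots hn.bot_lt).mpr
  have hroots : Set.MapsTo (f / g) s {y | y ^ n = 1} := fun y hy ↦
    (div_pow _ _ n).trans <| (div_eq_one_iff_eq (pow_ne_zero n (hg₀ y hy))).mpr (hfg hy)
  have hconst : ∀ y ∈ s, (f / g) y = (f / g) x := fun y hy ↦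
    hs.constant_of_mapsTo hfinite.isDiscrete (hf.div hg hg₀) hroots hy hx
  exact (div_eq_one_iff_eq (hg₀ x hx)).mp <| tendsto_nhds_unique
    (tendsto_const_nhds.congr' (eventually_of_mem hl fun y hy ↦ (hconst y hy).symm)) hlim

theorem tendsto_tsum_mul_pow {ι 𝕜 : Type*} [NormedField 𝕜] [CompleteSpace 𝕜] {a : ι → 𝕜}
    {e : ι → ℕ} {r : ℝ} (hr : 0 < r) (hs : Summable fun i ↦ ‖a i‖ * r ^ e i) :
    Tendsto (fun q : 𝕜 ↦ ∑' i, a i * q ^ e i) (𝓝 0) (𝓝 (∑' i, a i * 0 ^ e i)) := by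
  refine tendsto_tsum_of_dominated_convergence hs
    (fun i ↦ ((continuous_pow (e i)).tendsto 0).const_mul (a i)) ?_
  filter_upwards [Metric.ball_mem_nhds 0 hr] with q hq i
  rw [norm_mul, norm_pow]
  gcongr
  exact (mem_ball_zero_iff.mp hq).le

theorem logDeriv_comp_mul_left {𝕜 : Type*} [NontriviallyNormedField 𝕜] (f : 𝕜 → 𝕜) (c x : 𝕜) :
    logDeriv (fun y ↦ f (c * y)) x = c * logDeriv f (c * x) := by
  rw [logDeriv_apply, logDeriv_apply, deriv_comp_mul_left, smul_eq_mul, mul_div_assoc]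

theorem logDeriv_comp_add_const {𝕜 : Type*} [NontriviallyNormedField 𝕜] (f : 𝕜 → 𝕜) (c x : 𝕜) :
    logDeriv (fun y ↦ f (y + c)) x = logDeriv f (x + c) := by
  rw [logDeriv_apply, logDeriv_apply, deriv_comp_add_const]

theorem logDeriv_eq_of_eqOn {𝕜 𝕜' : Type*} [NontriviallyNormedField 𝕜]
    [NontriviallyNormedField 𝕜'] [NormedAlgebra 𝕜 𝕜'] {f g : 𝕜 → 𝕜'} {s : Set 𝕜} (hs : IsOpen s)
    (h : s.EqOn f g) {x : 𝕜} (hx : x ∈ s) : logDeriv f x = logDeriv g x :=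
  (logDeriv_congr_nhds (h.eventuallyEq_of_mem (hs.mem_nhds hx))).eq_of_nhds

end General

section UpperHalfPlane

theorem comap_im_atTop_neBot : NeBot I∞ :=
  comap_neBot_iff_frequently.mpr (Frequently.of_forall fun y ↦ ⟨⟨0, y⟩, rfl⟩)

theorem tendsto_mul_comap_im {c : ℝ} (hc : 0 < c) : Tendsto (fun τ : ℂ ↦ c * τ) I∞ I∞ :=
  tendsto_comap_iff.mpr (by simpa [Function.comp_def] using tendsto_comap.const_mul_atTop hc)

theorem two_mul_im_pos {τ : ℂ} (hτ : 0 < τ.im) : 0 < (2 * τ).im := by simpa using hτ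

theorem eq_of_apply_mul_eq_of_tendsto {X : Type*} [TopologicalSpace X] [T2Space X] {f : ℂ → X}
    {r : ℝ} {c : X} (hr : 1 < r) (hf : ∀ z : ℂ, 0 < z.im → f (r * z) = f z)
    (hlim : Tendsto f I∞ (𝓝 c)) {τ : ℂ} (hτ : 0 < τ.im) : f τ = c := by
  have him (n : ℕ) : ((r : ℂ) ^ n * τ).im = r ^ n * τ.im := by
    rw [← ofReal_pow, im_ofReal_mul]
  have hiter (n : ℕ) : f (r ^ n * τ) = f τ := by
    induction n with
    | zero => rw [pow_zero, one_mul]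
    | succ n ih => rw [pow_succ', mul_assoc, hf _ (by rw [him]; positivity), ih]
  have hpow : Tendsto (fun n : ℕ ↦ (r : ℂ) ^ n * τ) atTop I∞ := by
    simp only [tendsto_comap_iff, Function.comp_def, him]
    exact (tendsto_pow_atTop_atTop_of_one_lt hr).atTop_mul_const hτ
  exact tendsto_nhds_unique (tendsto_const_nhds.congr fun n ↦ (hiter n).symm) (hlim.comp hpow)

theorem eq_of_pow_eq_of_tendsto_div {f g : ℂ → ℂ} {n : ℕ}
    (hf : ∀ z : ℂ, 0 < z.im → DifferentiableAt ℂ f z)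
    (hg : ∀ z : ℂ, 0 < z.im → DifferentiableAt ℂ g z) (hg₀ : ∀ z : ℂ, 0 < z.im → g z ≠ 0)
    (hn : n ≠ 0) (hfg : ∀ z : ℂ, 0 < z.im → f z ^ n = g z ^ n)
    (hlim : Tendsto (f / g) I∞ (𝓝 1)) {τ : ℂ} (hτ : 0 < τ.im) : f τ = g τ :=
  have := comap_im_atTop_neBot
  eqOn_of_pow_eqOn_of_tendsto_div (convex_halfSpace_im_gt 0).isPreconnected
    (fun z hz ↦ (hf z hz).continuousAt.continuousWithinAt)
    (fun z hz ↦ (hg z hz).continuousAt.continuousWithinAt) hg₀ hn hfg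
    (tendsto_comap.eventually_gt_atTop 0) hlim hτ

end UpperHalfPlane

section JacobiTheta

/-- Pairs of integers of equal (left summand) or distinct (right summand) parity, parametrized by
the integer parts of their half sum and half difference. It reindexes the double series of a product
of two theta functions. -/
noncomputable def parityEquiv : (ℤ × ℤ) ⊕ (ℤ × ℤ) ≃ ℤ × ℤ :=
  Equiv.ofBijective
    (Sum.elim (fun p ↦ (p.1 + p.2, p.1 - p.2)) (fun p ↦ (p.1 + p.2 + 1, p.1 - p.2))) <| by
    constructor
    · rintro (⟨a, b⟩ | ⟨a, b⟩) (⟨c, d⟩ | ⟨c, d⟩) h <;>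
        simp only [Sum.elim_inl, Sum.elim_inr, Prod.mk.injEq] at h
      · obtain ⟨rfl, rfl⟩ : a = c ∧ b = d := by omega
        rfl
      · omega
      · omega
      · obtain ⟨rfl, rfl⟩ : a = c ∧ b = d := by omega
        rfl
    · rintro ⟨m, n⟩
      rcases Int.even_or_odd' (m + n) with ⟨k, hk | hk⟩
      · exact ⟨.inl (k, m - k), by simp only [Sum.elim_inl, Prod.mk.injEq]; omega⟩
      · exact ⟨.inr (k, m - k - 1), by simp only [Sum.elim_inr, Prod.mk.injEq]; omega⟩

theorem jacobiTheta₂_term_add_mul_sub (a b : ℤ) (z w τ : ℂ) :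
    jacobiTheta₂_term (a + b) z τ * jacobiTheta₂_term (a - b) w τ =
      jacobiTheta₂_term a (z + w) (2 * τ) * jacobiTheta₂_term b (z - w) (2 * τ) := by
  simp only [jacobiTheta₂_term, ← Complex.exp_add]
  push_cast
  ring_nf

theorem jacobiTheta₂_term_add_add_one_mul_sub (a b : ℤ) (z w τ : ℂ) :
    jacobiTheta₂_term (a + b + 1) z τ * jacobiTheta₂_term (a - b) w τ =
      cexp (2 * Real.pi * I * z + Real.pi * I * τ) *
        (jacobiTheta₂_term a (z + w + τ) (2 * τ) *
          jacobiTheta₂_term b (z - w + τ) (2 * τ)) := by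
  simp only [jacobiTheta₂_term, ← Complex.exp_add]
  push_cast
  ring_nf

theorem hasSum_jacobiTheta₂_term_mul (z w : ℂ) {τ : ℂ} (hτ : 0 < τ.im) :
    HasSum (fun p : ℤ × ℤ ↦ jacobiTheta₂_term p.1 z τ * jacobiTheta₂_term p.2 w τ)
      (jacobiTheta₂ z τ * jacobiTheta₂ w τ) := by
  have hnorm (z : ℂ) : Summable fun n ↦ ‖jacobiTheta₂_term n z τ‖ :=
    ((summable_jacobiTheta₂_term_iff z τ).mpr hτ).norm
  rw [jacobiTheta₂, jacobiTheta₂, tsum_mul_tsum_of_summable_norm (hnorm z) (hnorm w)]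
  exact (summable_mul_of_summable_norm (hnorm z) (hnorm w)).hasSum

theorem jacobiTheta₂_mul_jacobiTheta₂ (z w : ℂ) {τ : ℂ} (hτ : 0 < τ.im) :
    jacobiTheta₂ z τ * jacobiTheta₂ w τ =
      jacobiTheta₂ (z + w) (2 * τ) * jacobiTheta₂ (z - w) (2 * τ) +
      cexp (2 * Real.pi * I * z + Real.pi * I * τ) *
        (jacobiTheta₂ (z + w + τ) (2 * τ) * jacobiTheta₂ (z - w + τ) (2 * τ)) := by
  have h₂ := two_mul_im_pos hτ
  refine (parityEquiv.hasSum_iff.mpr (hasSum_jacobiTheta₂_term_mul z w hτ)).unique (.sum ?_ ?_)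
  · exact (hasSum_jacobiTheta₂_term_mul _ _ h₂).congr_fun fun p ↦
      jacobiTheta₂_term_add_mul_sub p.1 p.2 z w τ
  · exact ((hasSum_jacobiTheta₂_term_mul _ _ h₂).mul_left _).congr_fun fun p ↦
      jacobiTheta₂_term_add_add_one_mul_sub p.1 p.2 z w τ

theorem jacobiTheta₂_add_one_right (z τ : ℂ) :
    jacobiTheta₂ z (τ + 1) = jacobiTheta₂ (z + 1 / 2) τ := by
  refine tsum_congr fun n ↦ ?_
  obtain ⟨k, hk⟩ := Int.even_mul_succ_self (n - 1)
  have hsq : (n : ℂ) ^ 2 = n + 2 * k := by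
    exact_mod_cast (by linarith : n ^ 2 = n + 2 * k)
  rw [jacobiTheta₂_term, jacobiTheta₂_term, Complex.exp_eq_exp_iff_exists_int]
  exact ⟨k, by linear_combination (Real.pi * I) * hsq⟩

theorem jacobiTheta₂_div_neg_one_div (z : ℂ) {τ : ℂ} (hτ : τ ≠ 0) :
    jacobiTheta₂ (z / τ) (-1 / τ) =
      (-I * τ) ^ (2⁻¹ : ℂ) * cexp (Real.pi * I * z ^ 2 / τ) * jacobiTheta₂ z τ := by
  have hroot : (-I * τ) ^ (2⁻¹ : ℂ) ≠ 0 := by simp [cpow_eq_zero_iff, hτ]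
  rw [jacobiTheta₂_functional_equation z τ, one_div 2,
    show -Real.pi * I * z ^ 2 / τ = -(Real.pi * I * z ^ 2 / τ) by ring, Complex.exp_neg]
  field_simp [Complex.exp_ne_zero, hroot]

end JacobiTheta

section ThetaConstants

/-- The theta constant `θ₂ = Σ exp(πi (n + 1/2)² τ)`; the first factor is the part of the exponent
that does not depend on `n`. -/
noncomputable def thetaTwo (τ : ℂ) : ℂ :=
  cexp (Real.pi * I * τ / 4) * jacobiTheta₂ (τ / 2) τ

/-- The theta constant `θ₃ = Σ exp(πi n² τ)`. -/
noncomputable def thetaThree (τ : ℂ) : ℂ := jacobiTheta₂ 0 τ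

/-- The theta constant `θ₄ = Σ (-1)ⁿ exp(πi n² τ)`. -/
noncomputable def thetaFour (τ : ℂ) : ℂ := jacobiTheta₂ (1 / 2) τ

theorem thetaThree_add_one (τ : ℂ) : thetaThree (τ + 1) = thetaFour τ := by
  rw [thetaThree, thetaFour, jacobiTheta₂_add_one_right, zero_add]

theorem thetaFour_add_one (τ : ℂ) : thetaFour (τ + 1) = thetaThree τ := by
  rw [thetaThree, thetaFour, jacobiTheta₂_add_one_right, add_halves, ← jacobiTheta₂_add_left 0,
    zero_add]

theorem thetaTwo_add_one (τ : ℂ) :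
    thetaTwo (τ + 1) = cexp (Real.pi * I / 4) * thetaTwo τ := by
  rw [thetaTwo, thetaTwo, jacobiTheta₂_add_one_right, ← jacobiTheta₂_add_left (τ / 2),
    ← mul_assoc, ← Complex.exp_add]
  ring_nf

theorem thetaThree_sq {τ : ℂ} (hτ : 0 < τ.im) :
    thetaThree τ ^ 2 = thetaThree (2 * τ) ^ 2 + thetaTwo (2 * τ) ^ 2 := by
  rw [sq, thetaThree, jacobiTheta₂_mul_jacobiTheta₂ _ _ hτ, thetaTwo, mul_pow,
    ← Complex.exp_nat_mul, thetaThree]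
  ring_nf

theorem thetaTwo_sq {τ : ℂ} (hτ : 0 < τ.im) :
    thetaTwo τ ^ 2 = 2 * thetaTwo (2 * τ) * thetaThree (2 * τ) := by
  have hshift := jacobiTheta₂_add_left' 0 (2 * τ)
  have hexp : cexp (2 * Real.pi * I * (τ / 2) + Real.pi * I * τ) *
      cexp (-Real.pi * I * (2 * τ + 2 * 0)) = 1 := by
    rw [← Complex.exp_add, Complex.exp_eq_one_iff]
    exact ⟨0, by push_cast; ring⟩
  have hexp_sq : cexp (Real.pi * I * τ / 4) ^ 2 = cexp (Real.pi * I * (2 * τ) / 4) := by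
    rw [← Complex.exp_nat_mul]
    ring_nf
  rw [zero_add] at hshift
  rw [thetaTwo, mul_pow, sq (jacobiTheta₂ _ _), jacobiTheta₂_mul_jacobiTheta₂ _ _ hτ,
    show τ / 2 + τ / 2 + τ = 2 * τ by ring, add_halves, sub_self, zero_add, hshift, hexp_sq,
    thetaTwo, thetaThree, mul_div_cancel_left₀ τ (two_ne_zero' ℂ)]
  linear_combination cexp (Real.pi * I * (2 * τ) / 4) * jacobiTheta₂ 0 (2 * τ) *
    jacobiTheta₂ τ (2 * τ) * hexp

theorem thetaThree_add_nat_sq (j : ℕ) {τ : ℂ} (hτ : 0 < τ.im) :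
    thetaThree (τ + j) ^ 2 = thetaThree (2 * τ) ^ 2 + (-1) ^ j * thetaTwo (2 * τ) ^ 2 := by
  have hthree (z : ℂ) : thetaThree (z + 1 + 1) = thetaThree z := by
    rw [thetaThree_add_one, thetaFour_add_one]
  have htwo (z : ℂ) : thetaTwo (z + 1 + 1) ^ 2 = -thetaTwo z ^ 2 := by
    rw [thetaTwo_add_one, thetaTwo_add_one, ← mul_assoc, mul_pow, ← sq, ← pow_mul,
      ← Complex.exp_nat_mul, show ((2 * 2 : ℕ) : ℂ) * (Real.pi * I / 4) = Real.pi * I by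
        push_cast; ring, Complex.exp_pi_mul_I, neg_one_mul]
  induction j generalizing τ with
  | zero => simpa using thetaThree_sq hτ
  | succ j ih =>
    rw [Nat.cast_succ, show τ + (j + 1) = τ + 1 + j by ring, ih (by simpa using hτ),
      show 2 * (τ + 1) = 2 * τ + 1 + 1 by ring, hthree, htwo, pow_succ]
    ring

theorem thetaFour_sq {τ : ℂ} (hτ : 0 < τ.im) :
    thetaFour τ ^ 2 = thetaThree (2 * τ) ^ 2 - thetaTwo (2 * τ) ^ 2 := by
  simpa [thetaThree_add_one, sub_eq_add_neg] using thetaThree_add_nat_sq 1 hτ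

theorem thetaThree_pow_four {τ : ℂ} (hτ : 0 < τ.im) :
    thetaThree τ ^ 4 = thetaTwo τ ^ 4 + thetaFour τ ^ 4 := by
  simp only [show 4 = 2 * 2 from rfl, pow_mul, thetaThree_sq hτ, thetaTwo_sq hτ, thetaFour_sq hτ]
  ring

theorem thetaFour_two_mul_pow_four {τ : ℂ} (hτ : 0 < τ.im) :
    thetaFour (2 * τ) ^ 4 = thetaThree τ ^ 2 * thetaFour τ ^ 2 := by
  rw [thetaThree_sq hτ, thetaFour_sq hτ]
  linear_combination -thetaThree_pow_four (two_mul_im_pos hτ)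

theorem thetaThree_neg_one_div {τ : ℂ} (hτ : τ ≠ 0) :
    thetaThree (-1 / τ) = (-I * τ) ^ (2⁻¹ : ℂ) * thetaThree τ := by
  simpa [thetaThree] using jacobiTheta₂_div_neg_one_div 0 hτ

theorem thetaFour_neg_one_div {τ : ℂ} (hτ : τ ≠ 0) :
    thetaFour (-1 / τ) = (-I * τ) ^ (2⁻¹ : ℂ) * thetaTwo τ := by
  have h := jacobiTheta₂_div_neg_one_div (τ / 2) hτ
  rwa [show τ / 2 / τ = 1 / 2 by field_simp,
    show Real.pi * I * (τ / 2) ^ 2 / τ = Real.pi * I * τ / 4 by field_simp; ring, mul_assoc] at h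

theorem thetaTwo_neg_one_div {τ : ℂ} (hτ : τ ≠ 0) :
    thetaTwo (-1 / τ) = (-I * τ) ^ (2⁻¹ : ℂ) * thetaFour τ := by
  have h := jacobiTheta₂_div_neg_one_div (1 / 2) hτ
  have hexp : cexp (Real.pi * I * (-1 / τ) / 4) * cexp (Real.pi * I * (1 / 2) ^ 2 / τ) = 1 := by
    rw [← Complex.exp_add, Complex.exp_eq_one_iff]
    exact ⟨0, by push_cast; ring⟩
  rw [thetaTwo, thetaFour, show -1 / τ / 2 = -(1 / 2 / τ) by ring, jacobiTheta₂_neg_left, h]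
  linear_combination (-I * τ) ^ (2⁻¹ : ℂ) * jacobiTheta₂ (1 / 2) τ * hexp

end ThetaConstants

section Analytic

theorem differentiableAt_thetaThree {τ : ℂ} (hτ : 0 < τ.im) : DifferentiableAt ℂ thetaThree τ :=
  differentiableAt_jacobiTheta₂_snd 0 hτ

theorem differentiableAt_thetaFour {τ : ℂ} (hτ : 0 < τ.im) : DifferentiableAt ℂ thetaFour τ :=
  differentiableAt_jacobiTheta₂_snd (1 / 2) hτ

theorem differentiableAt_thetaTwo {τ : ℂ} (hτ : 0 < τ.im) : DifferentiableAt ℂ thetaTwo τ := by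
  have h : DifferentiableAt ℂ (fun τ : ℂ ↦ jacobiTheta₂ (τ / 2) τ) τ :=
    DifferentiableAt.comp (g := fun p : ℂ × ℂ ↦ jacobiTheta₂ p.1 p.2) (f := fun τ : ℂ ↦ (τ / 2, τ))
      τ (hasFDerivAt_jacobiTheta₂ (τ / 2) hτ).differentiableAt (by fun_prop)
  unfold thetaTwo
  fun_prop

theorem tendsto_thetaThree : Tendsto thetaThree I∞ (𝓝 1) := by
  have hexp : Tendsto (fun τ : ℂ ↦ Real.exp (-Real.pi * τ.im)) I∞ (𝓝 0) :=
    Real.tendsto_exp_atBot.comp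
      (tendsto_comap.const_mul_atTop_of_neg (neg_lt_zero.mpr Real.pi_pos))
  simpa [thetaThree, Function.comp_def, jacobiTheta_eq_jacobiTheta₂] using!
    (isBigO_at_im_infty_jacobiTheta_sub_one.trans_tendsto hexp).add_const 1

theorem tendsto_thetaFour : Tendsto thetaFour I∞ (𝓝 1) := by
  simp_rw [funext fun τ ↦ (thetaThree_add_one τ).symm]
  exact tendsto_thetaThree.comp
    (tendsto_comap_iff.mpr (by simpa [Function.comp_def] using tendsto_comap))

theorem jacobiTheta₂_term_half (n : ℤ) (τ : ℂ) :
    jacobiTheta₂_term n (τ / 2) τ = Function.Periodic.qParam 2 τ ^ (n * (n + 1)).natAbs := by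
  have hn : ((n * (n + 1)).natAbs : ℂ) = n * (n + 1) := by
    have hpos : 0 ≤ n * (n + 1) := by rcases le_or_gt 0 n with h | h <;> nlinarith
    rw [Nat.cast_natAbs, abs_of_nonneg hpos]
    push_cast
    rfl
  rw [jacobiTheta₂_term, Function.Periodic.qParam, ← Complex.exp_nat_mul, hn]
  push_cast
  ring_nf

theorem tendsto_jacobiTheta₂_half :
    Tendsto (fun τ : ℂ ↦ jacobiTheta₂ (τ / 2) τ) I∞ (𝓝 2) := by
  have hsummable : Summable fun n : ℤ ↦
      ‖(1 : ℂ)‖ * ‖Function.Periodic.qParam 2 I‖ ^ (n * (n + 1)).natAbs := by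
    simpa [← norm_pow, ← jacobiTheta₂_term_half] using
      ((summable_jacobiTheta₂_term_iff (I / 2) I).mpr (by simp)).norm
  have hlim : ∑' n : ℤ, (1 : ℂ) * 0 ^ (n * (n + 1)).natAbs = 2 := by
    rw [tsum_eq_sum (s := {0, -1}) fun n hn ↦ ?_, Finset.sum_pair (by norm_num)]
    · norm_num
    · have : n ≠ 0 ∧ n + 1 ≠ 0 := by grind
      simp [this]
  have h := (tendsto_tsum_mul_pow (norm_pos_iff.mpr (Complex.exp_ne_zero _)) hsummable).comp
    ((Function.Periodic.qParam_tendsto two_pos).mono_right nhdsWithin_le_nhds)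
  rw [hlim] at h
  simpa [jacobiTheta₂, jacobiTheta₂_term_half, Function.comp_def] using! h

end Analytic

section Eta

theorem qq_eq_qParam : qq = Function.Periodic.qParam 1 := by
  ext τ
  simp [qq, Function.Periodic.qParam]

theorem tendsto_qq : Tendsto qq I∞ (𝓝 0) := by
  rw [qq_eq_qParam]
  exact (Function.Periodic.qParam_tendsto one_pos).mono_right nhdsWithin_le_nhds

theorem tendsto_E₂ : Tendsto E₂ I∞ (𝓝 1) := by
  have hσ (n : ℕ) : sigmaC 1 n = ArithmeticFunction.sigma 1 n := by
    simp [sigmaC, ArithmeticFunction.sigma_apply]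
  have hsummable : Summable fun n : ℕ ↦ ‖sigmaC 1 (n + 1)‖ * ‖qq I‖ ^ (n + 1) := by
    simpa [hσ, qq] using ((summable_nat_add_iff 1).mpr
      (EisensteinSeries.summable_sigma_mul_cexp_pow one_le_two UpperHalfPlane.I)).norm
  have h := (tendsto_tsum_mul_pow (norm_pos_iff.mpr (Complex.exp_ne_zero _)) hsummable).comp
    tendsto_qq
  simpa [E₂] using! (h.const_mul 24).const_sub 1

theorem η_eq_eta : η = ModularForm.eta := by
  ext τ
  rw [η, ModularForm.eta, Function.Periodic.qParam]
  congr 1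
  · push_cast
    ring_nf
  · simp only [ModularForm.eta_q_eq_pow, qq]

theorem η_ne_zero {τ : ℂ} (hτ : 0 < τ.im) : η τ ≠ 0 := by
  rw [η_eq_eta]
  exact ModularForm.eta_ne_zero hτ

theorem differentiableAt_η {τ : ℂ} (hτ : 0 < τ.im) : DifferentiableAt ℂ η τ := by
  rw [η_eq_eta]
  exact ModularForm.differentiableAt_eta_of_mem_upperHalfPlaneSet hτ

theorem logDeriv_η {τ : ℂ} (hτ : 0 < τ.im) : logDeriv η τ = Real.pi * I / 12 * E₂ τ := by
  have h := ModularForm.logDeriv_eta_eq_E2 ⟨τ, hτ⟩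
  rw [EisensteinSeries.E2_eq_tsum_cexp, tsum_pnat_eq_tsum_succ
    (f := fun n ↦ (ArithmeticFunction.sigma 1 n : ℂ) * cexp (2 * Real.pi * I * τ) ^ n)] at h
  rw [η_eq_eta, E₂]
  simpa [sigmaC, qq, ArithmeticFunction.sigma_apply] using! h

theorem tendsto_tprod_one_sub_qq_pow :
    Tendsto (fun τ ↦ ∏' n : ℕ, (1 - qq τ ^ (n + 1))) I∞ (𝓝 1) := by
  have h := (ModularForm.differentiableOn_tprod_one_sub_pow.differentiableAt
    (Metric.ball_mem_nhds (0 : ℂ) one_pos)).continuousAt.tendsto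
  simp only [ne_eq, Nat.add_eq_zero_iff, one_ne_zero, and_false, not_false_eq_true, zero_pow,
    sub_zero, tprod_one] at h
  exact h.comp tendsto_qq

end Eta

section ThetaProduct

open UpperHalfPlane hiding I
open ModularGroup
open scoped MatrixGroups

/-- The product of the three theta constants, whose eighth power is a modular form of level one. -/
noncomputable def thetaProd (τ : ℂ) : ℂ := thetaTwo τ * thetaThree τ * thetaFour τ

theorem differentiableAt_thetaProd {τ : ℂ} (hτ : 0 < τ.im) : DifferentiableAt ℂ thetaProd τ :=
  ((differentiableAt_thetaTwo hτ).mul (differentiableAt_thetaThree hτ)).mul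
    (differentiableAt_thetaFour hτ)

theorem thetaProd_add_one_pow_eight (τ : ℂ) : thetaProd (τ + 1) ^ 8 = thetaProd τ ^ 8 := by
  have hunity : cexp (Real.pi * I / 4) ^ 8 = 1 := by
    rw [← Complex.exp_nat_mul, Complex.exp_eq_one_iff]
    exact ⟨1, by push_cast; ring⟩
  simp only [thetaProd, thetaThree_add_one, thetaFour_add_one, thetaTwo_add_one, mul_pow, hunity]
  ring

theorem thetaProd_neg_one_div_pow_eight {τ : ℂ} (hτ : τ ≠ 0) :
    thetaProd (-1 / τ) ^ 8 = τ ^ 12 * thetaProd τ ^ 8 := by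
  have hroot : ((-I * τ) ^ (2⁻¹ : ℂ)) ^ 24 = τ ^ 12 := by
    rw [show 24 = 2 * 12 from rfl, pow_mul, cpow_ofNat_inv_pow, mul_pow, neg_pow,
      I_pow_eq_pow_mod]
    norm_num
  rw [thetaProd, thetaThree_neg_one_div hτ, thetaFour_neg_one_div hτ, thetaTwo_neg_one_div hτ,
    thetaProd, ← hroot]
  ring

theorem tendsto_thetaProd_div_η_pow_three :
    Tendsto (fun τ ↦ thetaProd τ / (2 * η τ ^ 3)) I∞ (𝓝 1) := by
  have h := ((tendsto_jacobiTheta₂_half.mul tendsto_thetaThree).mul tendsto_thetaFour).div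
    ((tendsto_tprod_one_sub_qq_pow.pow 3).const_mul 2) (by norm_num)
  rw [show (2 * 1 * 1 / (2 * 1 ^ 3) : ℂ) = 1 by norm_num] at h
  refine h.congr fun τ ↦ ?_
  have hexp : cexp (Real.pi * I * τ / 4) = cexp (Real.pi * I * τ / 12) ^ 3 := by
    rw [← Complex.exp_nat_mul]
    push_cast
    ring_nf
  rw [Pi.div_apply, thetaProd, thetaTwo, η, hexp, mul_pow]
  field_simp [Complex.exp_ne_zero]

open scoped ModularForm in
theorem slash_S_thetaProd_pow_eight :
    ((fun τ : ℍ ↦ thetaProd τ ^ 8) ∣[(12 : ℤ)] S) = fun τ : ℍ ↦ thetaProd τ ^ 8 := by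
  ext τ
  have hτ := τ.ne_zero
  rw [ModularForm.SL_slash_apply, modular_S_smul, denom_S, coe_mk, inv_neg, ← one_div, ← neg_div,
    thetaProd_neg_one_div_pow_eight hτ, zpow_neg]
  norm_cast
  field_simp

open scoped ModularForm in
theorem slash_T_thetaProd_pow_eight :
    ((fun τ : ℍ ↦ thetaProd τ ^ 8) ∣[(12 : ℤ)] T) = fun τ : ℍ ↦ thetaProd τ ^ 8 := by
  ext τ
  have hdenom : denom T τ = 1 := by
    rw [denom_apply]
    simp [T]
  rw [ModularForm.SL_slash_apply, modular_T_smul, hdenom, one_zpow, mul_one, coe_vadd, add_comm]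
  exact_mod_cast thetaProd_add_one_pow_eight τ

theorem discriminant_eq_η_pow (τ : ℍ) : CuspForm.discriminant τ = η τ ^ 24 := by
  rw [η_eq_eta]
  rfl

theorem isZeroAtImInfty_thetaProd_pow_eight : IsZeroAtImInfty fun τ : ℍ ↦ thetaProd τ ^ 8 := by
  have hratio := (tendsto_thetaProd_div_η_pow_three.comp tendsto_coe_atImInfty).pow 8
  have hΔ : Tendsto (fun τ : ℍ ↦ η τ ^ 24) atImInfty (𝓝 0) := by
    simp_rw [← discriminant_eq_η_pow]
    exact CuspFormClass.zero_at_infty CuspForm.discriminant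
  have h := hratio.mul (hΔ.const_mul 256)
  rw [mul_zero, mul_zero] at h
  refine h.congr fun τ ↦ ?_
  have hη := η_ne_zero τ.2
  simp only [Function.comp_apply]
  field_simp
  norm_num

/-- The eighth power of the product of the theta constants, as a cusp form of level one. -/
noncomputable def thetaProdCuspForm : CuspForm 𝒮ℒ 12 where
  toFun τ := thetaProd τ ^ 8
  slash_action_eq' A hA := by
    obtain ⟨A, rfl⟩ := hA
    exact SlashInvariantForm.slash_action_generators_SL2Z slash_S_thetaProd_pow_eight
      slash_T_thetaProd_pow_eight A
  holo' := by
    rw [UpperHalfPlane.mdifferentiable_iff]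
    refine .congr (fun z hz ↦ ((differentiableAt_thetaProd hz).pow 8).differentiableWithinAt)
      fun z hz ↦ ?_
    simp [ofComplex_apply_of_im_pos hz]
  zero_at_cusps' hc := by
    rw [Subgroup.IsArithmetic.isCusp_iff_isCusp_SL2Z] at hc
    rw [OnePoint.isZeroAt_iff_forall_SL2Z hc]
    intro γ _
    rw [SlashInvariantForm.slash_action_generators_SL2Z slash_S_thetaProd_pow_eight
      slash_T_thetaProd_pow_eight]
    exact isZeroAtImInfty_thetaProd_pow_eight

theorem thetaProd_pow_eight {τ : ℂ} (hτ : 0 < τ.im) : thetaProd τ ^ 8 = (2 * η τ ^ 3) ^ 8 := by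
  obtain ⟨c, hc⟩ := CuspForm.exists_smul_discriminant_of_weight_eq_twelve thetaProdCuspForm
  have heq (z : ℍ) : thetaProd z ^ 8 = c * η z ^ 24 := by
    rw [← discriminant_eq_η_pow]
    exact (DFunLike.congr_fun hc z).symm
  have hratio (z : ℍ) : (thetaProd z / (2 * η z ^ 3)) ^ 8 = c / 256 := by
    have := η_ne_zero z.2
    rw [div_pow, heq, mul_pow]
    field_simp
    norm_num
  have hc_eq : c / 256 = 1 ^ 8 := tendsto_nhds_unique
    (tendsto_const_nhds.congr fun z ↦ (hratio z).symm)
    ((tendsto_thetaProd_div_η_pow_three.comp tendsto_coe_atImInfty).pow 8)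
  rw [heq ⟨τ, hτ⟩]
  linear_combination 256 * η τ ^ 24 * hc_eq

theorem thetaProd_eq {τ : ℂ} (hτ : 0 < τ.im) : thetaProd τ = 2 * η τ ^ 3 :=
  eq_of_pow_eq_of_tendsto_div (fun _ ↦ differentiableAt_thetaProd)
    (fun _ hz ↦ ((differentiableAt_η hz).pow 3).const_mul 2)
    (fun _ hz ↦ mul_ne_zero two_ne_zero (pow_ne_zero 3 (η_ne_zero hz))) (by norm_num)
    (fun _ ↦ thetaProd_pow_eight) tendsto_thetaProd_div_η_pow_three hτ

end ThetaProduct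

section EtaQuotients

theorem thetaProd_ne_zero {τ : ℂ} (hτ : 0 < τ.im) : thetaProd τ ≠ 0 := by
  rw [thetaProd_eq hτ]
  exact mul_ne_zero two_ne_zero (pow_ne_zero 3 (η_ne_zero hτ))

theorem thetaTwo_ne_zero {τ : ℂ} (hτ : 0 < τ.im) : thetaTwo τ ≠ 0 :=
  left_ne_zero_of_mul (left_ne_zero_of_mul (thetaProd_ne_zero hτ))

theorem thetaThree_ne_zero {τ : ℂ} (hτ : 0 < τ.im) : thetaThree τ ≠ 0 :=
  right_ne_zero_of_mul (left_ne_zero_of_mul (thetaProd_ne_zero hτ))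

theorem thetaFour_ne_zero {τ : ℂ} (hτ : 0 < τ.im) : thetaFour τ ≠ 0 :=
  right_ne_zero_of_mul (thetaProd_ne_zero hτ)

theorem differentiableAt_η_mul {c τ : ℂ} (hτ : 0 < (c * τ).im) :
    DifferentiableAt ℂ (fun z ↦ η (c * z)) τ :=
  (differentiableAt_η hτ).comp τ (by fun_prop)

theorem thetaFour_two_mul_pow_six_mul {τ : ℂ} (hτ : 0 < τ.im) :
    thetaFour (2 * τ) ^ 6 * (2 * thetaProd (2 * τ)) ^ 2 = thetaProd τ ^ 4 :=
  calc
    _ = (thetaFour (2 * τ) ^ 4) ^ 2 * (2 * thetaTwo (2 * τ) * thetaThree (2 * τ)) ^ 2 := by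
      rw [thetaProd]
      ring
    _ = _ := by
      rw [thetaFour_two_mul_pow_four hτ, ← thetaTwo_sq hτ, thetaProd]
      ring

theorem thetaTwo_pow_six_mul {τ : ℂ} (hτ : 0 < τ.im) :
    thetaTwo τ ^ 6 * thetaProd τ ^ 2 = 16 * thetaProd (2 * τ) ^ 4 :=
  calc
    _ = (thetaTwo τ ^ 2) ^ 4 * (thetaThree τ ^ 2 * thetaFour τ ^ 2) := by
      rw [thetaProd]
      ring
    _ = _ := by
      rw [thetaTwo_sq hτ, ← thetaFour_two_mul_pow_four hτ, thetaProd]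
      ring

theorem tendsto_thetaFour_mul_η_div :
    Tendsto ((fun τ ↦ thetaFour (2 * τ) * η (2 * τ)) / fun τ ↦ η τ ^ 2) I∞ (𝓝 1) := by
  have hdouble := tendsto_mul_comap_im two_pos
  have h := ((tendsto_thetaFour.comp hdouble).mul (tendsto_tprod_one_sub_qq_pow.comp hdouble)).div
    (tendsto_tprod_one_sub_qq_pow.pow 2) (by norm_num)
  rw [show (1 * 1 / 1 ^ 2 : ℂ) = 1 by norm_num] at h
  refine h.congr fun τ ↦ ?_
  have hexp : cexp (Real.pi * I * (2 * τ) / 12) = cexp (Real.pi * I * τ / 12) ^ 2 := by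
    rw [← Complex.exp_nat_mul]
    push_cast
    ring_nf
  simp only [Pi.div_apply, Function.comp_apply, ofReal_ofNat, η, hexp]
  field_simp [Complex.exp_ne_zero]

theorem tendsto_thetaTwo_mul_η_div :
    Tendsto ((fun τ ↦ thetaTwo τ * η τ) / fun τ ↦ 2 * η (2 * τ) ^ 2) I∞ (𝓝 1) := by
  have hdouble := tendsto_tprod_one_sub_qq_pow.comp (tendsto_mul_comap_im two_pos)
  have h := (tendsto_jacobiTheta₂_half.mul tendsto_tprod_one_sub_qq_pow).div
    ((hdouble.pow 2).const_mul 2) (by norm_num)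
  rw [show (2 * 1 / (2 * 1 ^ 2) : ℂ) = 1 by norm_num] at h
  refine h.congr fun τ ↦ ?_
  have hexp : cexp (Real.pi * I * τ / 4) * cexp (Real.pi * I * τ / 12) =
      cexp (Real.pi * I * (2 * τ) / 12) ^ 2 := by
    rw [← Complex.exp_nat_mul, ← Complex.exp_add]
    push_cast
    ring_nf
  simp only [Pi.div_apply, Function.comp_apply, ofReal_ofNat, thetaTwo, η, mul_pow, ← hexp]
  field_simp [Complex.exp_ne_zero]

theorem thetaFour_two_mul {τ : ℂ} (hτ : 0 < τ.im) :
    thetaFour (2 * τ) = η τ ^ 2 / η (2 * τ) := by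
  have hpow (z : ℂ) (hz : 0 < z.im) : (thetaFour (2 * z) * η (2 * z)) ^ 6 = (η z ^ 2) ^ 6 := by
    have h := thetaFour_two_mul_pow_six_mul hz
    rw [thetaProd_eq hz, thetaProd_eq (two_mul_im_pos hz)] at h
    linear_combination h / 16
  rw [eq_div_iff (η_ne_zero (two_mul_im_pos hτ))]
  exact eq_of_pow_eq_of_tendsto_div
    (fun z hz ↦ ((differentiableAt_thetaFour (two_mul_im_pos hz)).comp z (by fun_prop)).mul
      (differentiableAt_η_mul (two_mul_im_pos hz)))
    (fun _ hz ↦ (differentiableAt_η hz).pow 2) (fun _ hz ↦ pow_ne_zero 2 (η_ne_zero hz))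
    (by norm_num) hpow tendsto_thetaFour_mul_η_div hτ

theorem thetaTwo_eq {τ : ℂ} (hτ : 0 < τ.im) : thetaTwo τ = 2 * η (2 * τ) ^ 2 / η τ := by
  have hpow (z : ℂ) (hz : 0 < z.im) : (thetaTwo z * η z) ^ 6 = (2 * η (2 * z) ^ 2) ^ 6 := by
    have h := thetaTwo_pow_six_mul hz
    rw [thetaProd_eq hz, thetaProd_eq (two_mul_im_pos hz)] at h
    linear_combination h / 4
  rw [eq_div_iff (η_ne_zero hτ)]
  exact eq_of_pow_eq_of_tendsto_div
    (fun _ hz ↦ (differentiableAt_thetaTwo hz).mul (differentiableAt_η hz))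
    (fun _ hz ↦ ((differentiableAt_η_mul (two_mul_im_pos hz)).pow 2).const_mul 2)
    (fun _ hz ↦ mul_ne_zero two_ne_zero (pow_ne_zero 2 (η_ne_zero (two_mul_im_pos hz))))
    (by norm_num) hpow tendsto_thetaTwo_mul_η_div hτ

theorem thetaTwo_two_mul {τ : ℂ} (hτ : 0 < τ.im) :
    thetaTwo (2 * τ) = 2 * η (4 * τ) ^ 2 / η (2 * τ) := by
  rw [thetaTwo_eq (two_mul_im_pos hτ), ← mul_assoc, show (2 : ℂ) * 2 = 4 by norm_num]

theorem thetaThree_two_mul {τ : ℂ} (hτ : 0 < τ.im) :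
    thetaThree (2 * τ) = η (2 * τ) ^ 5 / (η τ ^ 2 * η (4 * τ) ^ 2) := by
  have h₁ := η_ne_zero hτ
  have h₂ := η_ne_zero (two_mul_im_pos hτ)
  have h₄ : η (4 * τ) ≠ 0 := η_ne_zero (by simpa using hτ)
  have hP := thetaProd_eq (two_mul_im_pos hτ)
  rw [thetaProd, thetaTwo_two_mul hτ, thetaFour_two_mul hτ] at hP
  field_simp at hP ⊢
  linear_combination hP

end EtaQuotients

section LogarithmicDerivatives

theorem logDeriv_η_mul_pow {c τ : ℂ} (hτ : 0 < (c * τ).im) (n : ℕ) :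
    logDeriv (fun z ↦ η (c * z) ^ n) τ = n * (c * (Real.pi * I / 12 * E₂ (c * τ))) := by
  rw [logDeriv_fun_pow (differentiableAt_η_mul hτ), logDeriv_comp_mul_left, logDeriv_η hτ]

theorem η_mul_pow_ne_zero {c τ : ℂ} (hτ : 0 < (c * τ).im) (n : ℕ) : η (c * τ) ^ n ≠ 0 :=
  pow_ne_zero n (η_ne_zero hτ)

theorem logDeriv_thetaTwo_div_thetaFour_two_mul {τ : ℂ} (hτ : 0 < τ.im) :
    logDeriv (thetaTwo / thetaFour) (2 * τ) = Real.pi * I / 4 * E₄₂ τ := by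
  have h₁ : 0 < (1 * τ).im := by rwa [one_mul]
  have h₄ : 0 < (4 * τ).im := by simpa using hτ
  have heq : {z : ℂ | 0 < z.im}.EqOn (fun z ↦ (thetaTwo / thetaFour) (2 * z))
      fun z ↦ 2 * (η (4 * z) ^ 2 / η (1 * z) ^ 2) := fun z hz ↦ by
    have := η_ne_zero (two_mul_im_pos hz)
    simp only [Pi.div_apply, thetaTwo_two_mul hz, thetaFour_two_mul hz, one_mul]
    field_simp
  have h := logDeriv_eq_of_eqOn UpperHalfPlane.isOpen_upperHalfPlaneSet heq hτ
  rw [logDeriv_comp_mul_left, logDeriv_const_mul _ _ two_ne_zero,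
    logDeriv_div τ (η_mul_pow_ne_zero h₄ 2) (η_mul_pow_ne_zero h₁ 2)
      ((differentiableAt_η_mul h₄).fun_pow 2) ((differentiableAt_η_mul h₁).fun_pow 2),
    logDeriv_η_mul_pow h₄, logDeriv_η_mul_pow h₁] at h
  rw [E₄₂]
  push_cast [one_mul] at h
  linear_combination h / 2

theorem logDeriv_thetaTwo_div_thetaThree_two_mul {τ : ℂ} (hτ : 0 < τ.im) :
    logDeriv (thetaTwo / thetaThree) (2 * τ) =
      Real.pi * I / 12 * (8 * E₂ (4 * τ) - 6 * E₂ (2 * τ) + E₂ τ) := by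
  have h₁ : 0 < (1 * τ).im := by rwa [one_mul]
  have h₂ := two_mul_im_pos hτ
  have h₄ : 0 < (4 * τ).im := by simpa using hτ
  have heq : {z : ℂ | 0 < z.im}.EqOn (fun z ↦ (thetaTwo / thetaThree) (2 * z))
      fun z ↦ 2 * (η (1 * z) ^ 2 * η (4 * z) ^ 4 / η (2 * z) ^ 6) := fun z hz ↦ by
    have := η_ne_zero (two_mul_im_pos hz)
    simp only [Pi.div_apply, thetaTwo_two_mul hz, thetaThree_two_mul hz, one_mul]
    field_simp
  have h := logDeriv_eq_of_eqOn UpperHalfPlane.isOpen_upperHalfPlaneSet heq hτ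
  have hd₁ := (differentiableAt_η_mul h₁).fun_pow 2
  have hd₄ := (differentiableAt_η_mul h₄).fun_pow 4
  rw [logDeriv_comp_mul_left, logDeriv_const_mul _ _ two_ne_zero,
    logDeriv_div (f := fun z ↦ η (1 * z) ^ 2 * η (4 * z) ^ 4) τ
      (mul_ne_zero (η_mul_pow_ne_zero h₁ 2) (η_mul_pow_ne_zero h₄ 4)) (η_mul_pow_ne_zero h₂ 6)
      (hd₁.fun_mul hd₄) ((differentiableAt_η_mul h₂).fun_pow 6),
    logDeriv_mul τ (η_mul_pow_ne_zero h₁ 2) (η_mul_pow_ne_zero h₄ 4) hd₁ hd₄,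
    logDeriv_η_mul_pow h₁, logDeriv_η_mul_pow h₂, logDeriv_η_mul_pow h₄] at h
  push_cast [one_mul] at h
  linear_combination h / 2

theorem logDeriv_two_mul_div_one_add_sq {f : ℂ → ℂ} {z : ℂ} (hf : DifferentiableAt ℂ f z)
    (hf₀ : f z ≠ 0) (hf₁ : 1 + f z ^ 2 ≠ 0) :
    logDeriv (fun w ↦ 2 * f w / (1 + f w ^ 2)) z =
      logDeriv f z * ((1 - f z ^ 2) / (1 + f z ^ 2)) := by
  rw [logDeriv_div (f := fun w ↦ 2 * f w) z (mul_ne_zero two_ne_zero hf₀) hf₁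
      (hf.const_mul 2) (by fun_prop),
    logDeriv_const_mul _ _ two_ne_zero, logDeriv_apply, logDeriv_apply, deriv_const_add',
    deriv_fun_pow hf]
  field_simp
  push_cast
  ring

theorem differentiableAt_thetaTwo_div_thetaThree {τ : ℂ} (hτ : 0 < τ.im) :
    DifferentiableAt ℂ (thetaTwo / thetaThree) τ :=
  (differentiableAt_thetaTwo hτ).div (differentiableAt_thetaThree hτ) (thetaThree_ne_zero hτ)

theorem one_add_thetaTwo_div_thetaThree_sq {τ : ℂ} (hτ : 0 < τ.im) :
    1 + (thetaTwo / thetaThree) (2 * τ) ^ 2 = thetaThree τ ^ 2 / thetaThree (2 * τ) ^ 2 := by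
  have := thetaThree_ne_zero (two_mul_im_pos hτ)
  rw [Pi.div_apply, thetaThree_sq hτ]
  field_simp

theorem one_sub_thetaTwo_div_thetaThree_sq {τ : ℂ} (hτ : 0 < τ.im) :
    1 - (thetaTwo / thetaThree) (2 * τ) ^ 2 = thetaFour τ ^ 2 / thetaThree (2 * τ) ^ 2 := by
  have := thetaThree_ne_zero (two_mul_im_pos hτ)
  rw [Pi.div_apply, thetaFour_sq hτ]
  field_simp

theorem thetaTwo_div_thetaThree_sq {τ : ℂ} (hτ : 0 < τ.im) :
    (thetaTwo / thetaThree) τ ^ 2 = 2 * (thetaTwo / thetaThree) (2 * τ) /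
      (1 + (thetaTwo / thetaThree) (2 * τ) ^ 2) := by
  have h := thetaThree_ne_zero hτ
  have := thetaThree_ne_zero (two_mul_im_pos hτ)
  rw [one_add_thetaTwo_div_thetaThree_sq hτ, Pi.div_apply, Pi.div_apply, div_pow, thetaTwo_sq hτ]
  field_simp

theorem logDeriv_thetaTwo_div_thetaThree_mul_sq {τ : ℂ} (hτ : 0 < τ.im) :
    logDeriv (thetaTwo / thetaThree) τ * thetaThree τ ^ 2 =
      logDeriv (thetaTwo / thetaThree) (2 * τ) * thetaFour τ ^ 2 := by
  have h₂ := two_mul_im_pos hτ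
  have h₃ := thetaThree_ne_zero hτ
  have h₃' := thetaThree_ne_zero h₂
  have hadd := one_add_thetaTwo_div_thetaThree_sq hτ
  have h := logDeriv_eq_of_eqOn UpperHalfPlane.isOpen_upperHalfPlaneSet
    (f := fun z ↦ (thetaTwo / thetaThree) z ^ 2)
    (fun z hz ↦ thetaTwo_div_thetaThree_sq hz) hτ
  rw [logDeriv_fun_pow (differentiableAt_thetaTwo_div_thetaThree hτ),
    logDeriv_comp_mul_left (fun w ↦ 2 * (thetaTwo / thetaThree) w /
      (1 + (thetaTwo / thetaThree) w ^ 2)),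
    logDeriv_two_mul_div_one_add_sq (differentiableAt_thetaTwo_div_thetaThree h₂)
      (div_ne_zero (thetaTwo_ne_zero h₂) h₃')
      (by rw [hadd]; exact div_ne_zero (pow_ne_zero 2 h₃) (pow_ne_zero 2 h₃')),
    hadd, one_sub_thetaTwo_div_thetaThree_sq hτ, div_div_div_cancel_right₀ (pow_ne_zero 2 h₃')] at h
  push_cast at h
  field_simp at h
  linear_combination h

theorem tendsto_logDeriv_thetaTwo_div_thetaThree :
    Tendsto (fun τ ↦ logDeriv (thetaTwo / thetaThree) (2 * τ)) I∞ (𝓝 (Real.pi * I / 4)) := by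
  have h := ((((tendsto_E₂.comp (tendsto_mul_comap_im four_pos)).const_mul 8).sub
    ((tendsto_E₂.comp (tendsto_mul_comap_im two_pos)).const_mul 6)).add
      tendsto_E₂).const_mul (Real.pi * I / 12)
  rw [show Real.pi * I / 12 * (8 * 1 - 6 * 1 + 1) = Real.pi * I / 4 by ring] at h
  refine h.congr' ?_
  filter_upwards [tendsto_comap.eventually_gt_atTop 0] with τ hτ
  simpa using (logDeriv_thetaTwo_div_thetaThree_two_mul hτ).symm

theorem logDeriv_thetaTwo_div_thetaThree {τ : ℂ} (hτ : 0 < τ.im) :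
    logDeriv (thetaTwo / thetaThree) τ = Real.pi * I / 4 * thetaFour τ ^ 4 := by
  rw [← div_eq_iff (pow_ne_zero 4 (thetaFour_ne_zero hτ))]
  have hdouble (z : ℂ) (hz : 0 < z.im) :
      logDeriv (thetaTwo / thetaThree) (2 * z) / thetaFour (2 * z) ^ 4 =
        logDeriv (thetaTwo / thetaThree) z / thetaFour z ^ 4 := by
    have := thetaThree_ne_zero hz
    have := thetaFour_ne_zero hz
    rw [thetaFour_two_mul_pow_four hz]
    field_simp
    linear_combination -logDeriv_thetaTwo_div_thetaThree_mul_sq hz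
  have hlim := tendsto_logDeriv_thetaTwo_div_thetaThree.div
    ((tendsto_thetaFour.comp (tendsto_mul_comap_im two_pos)).pow 4) (by norm_num)
  rw [one_pow, div_one] at hlim
  rw [← hdouble τ hτ]
  refine eq_of_apply_mul_eq_of_tendsto one_lt_two (fun z hz ↦ ?_) hlim hτ
  simpa using hdouble (2 * z) (two_mul_im_pos hz)

theorem logDeriv_thetaTwo_div_thetaFour {τ : ℂ} (hτ : 0 < τ.im) :
    logDeriv (thetaTwo / thetaFour) τ = Real.pi * I / 4 * thetaThree τ ^ 4 := by
  have hshift : (fun z ↦ (thetaTwo / thetaThree) (z + 1)) =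
      fun z ↦ cexp (Real.pi * I / 4) * (thetaTwo / thetaFour) z := by
    ext z
    simp only [Pi.div_apply, thetaTwo_add_one, thetaThree_add_one, mul_div_assoc]
  rw [← logDeriv_const_mul τ _ (Complex.exp_ne_zero (Real.pi * I / 4)), ← hshift,
    logDeriv_comp_add_const, logDeriv_thetaTwo_div_thetaThree (by simpa using hτ),
    thetaFour_add_one]

theorem thetaThree_two_mul_pow_four {τ : ℂ} (hτ : 0 < τ.im) : thetaThree (2 * τ) ^ 4 = E₄₂ τ :=
  mul_left_cancel₀ (b := thetaThree (2 * τ) ^ 4) (by simp : (Real.pi * I / 4 : ℂ) ≠ 0) <|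
    (logDeriv_thetaTwo_div_thetaFour (two_mul_im_pos hτ)).symm.trans
      (logDeriv_thetaTwo_div_thetaFour_two_mul hτ)

theorem thetaFour_two_mul_pow_four_eq_E₂ {τ : ℂ} (hτ : 0 < τ.im) :
    thetaFour (2 * τ) ^ 4 = (8 * E₂ (4 * τ) - 6 * E₂ (2 * τ) + E₂ τ) / 3 := by
  have h := logDeriv_thetaTwo_div_thetaThree (two_mul_im_pos hτ)
  rw [logDeriv_thetaTwo_div_thetaThree_two_mul hτ] at h
  refine mul_left_cancel₀ (by simp : (Real.pi * I / 4 : ℂ) ≠ 0) ?_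
  linear_combination -h

end LogarithmicDerivatives

section ThetaDecomposition

theorem θ_eq_thetaThree (τ : ℂ) : θ τ = thetaThree (2 * τ) := by
  refine tsum_congr fun n ↦ ?_
  rw [qq, jacobiTheta₂_term, ← Complex.exp_int_mul]
  push_cast
  ring_nf

theorem g₄_eq (j : ℕ) {τ : ℂ} (hτ : 0 < τ.im) :
    g₄ j τ = thetaFour (2 * τ) ^ 2 - (-1) ^ j * thetaTwo (2 * τ) ^ 2 := by
  have h₂ := two_mul_im_pos hτ
  rw [g₄, θ_eq_thetaThree, θ_eq_thetaThree, mul_div_cancel₀ _ (two_ne_zero' ℂ),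
    thetaThree_add_nat_sq j hτ]
  linear_combination -thetaThree_sq h₂ - thetaFour_sq h₂

theorem thetaTwo_two_mul_sq_mul_thetaFour_two_mul_sq {τ : ℂ} (hτ : 0 < τ.im) :
    thetaTwo (2 * τ) ^ 2 * thetaFour (2 * τ) ^ 2 =
      4 * (η τ * η (4 * τ) / η (2 * τ)) ^ 4 := by
  rw [thetaTwo_two_mul hτ, thetaFour_two_mul hτ]
  ring

theorem g₄_sq (j : ℕ) {τ : ℂ} (hτ : 0 < τ.im) :
    g₄ j τ ^ 2 = E₄₂ τ - (-1) ^ j * 8 * (η τ * η (4 * τ) / η (2 * τ)) ^ 4 := by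
  rw [g₄_eq j hτ]
  linear_combination thetaThree_two_mul_pow_four hτ - thetaThree_pow_four (two_mul_im_pos hτ) -
    2 * (-1) ^ j * thetaTwo_two_mul_sq_mul_thetaFour_two_mul_sq hτ +
    thetaTwo (2 * τ) ^ 4 * neg_one_pow_sq ℂ j

theorem g₄_mul_g₄_succ (j : ℕ) {τ : ℂ} (hτ : 0 < τ.im) :
    g₄ j τ * g₄ (j + 1) τ = E₄₂' τ := by
  have hthree := thetaThree_two_mul_pow_four hτ
  rw [E₄₂] at hthree
  rw [g₄_eq j hτ, g₄_eq (j + 1) hτ, E₄₂', pow_succ]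
  linear_combination 2 * thetaFour_two_mul_pow_four_eq_E₂ hτ - hthree +
    thetaThree_pow_four (two_mul_im_pos hτ) - thetaTwo (2 * τ) ^ 4 * neg_one_pow_sq ℂ j

theorem g₄_neg_one_div (j : ℕ) {τ : ℂ} (hτ : 0 < τ.im) :
    g₄ j (-1 / (4 * τ)) = (-1) ^ j * 2 * I * τ * g₄ j τ := by
  have hS : 0 < (-1 / (4 * τ)).im := by
    simpa [neg_div] using UpperHalfPlane.im_inv_neg_coe_pos ⟨4 * τ, by simpa using hτ⟩
  have hτ₀ : 2 * τ ≠ 0 := fun h ↦ by simpa [h] using two_mul_im_pos hτ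
  have hroot : ((-I * (2 * τ)) ^ (2⁻¹ : ℂ)) ^ 2 = -I * (2 * τ) := cpow_ofNat_inv_pow _ 2
  rw [g₄_eq j hS, g₄_eq j hτ, show 2 * (-1 / (4 * τ)) = -1 / (2 * τ) by field_simp; ring,
    thetaFour_neg_one_div hτ₀, thetaTwo_neg_one_div hτ₀, mul_pow, mul_pow, hroot]
  linear_combination 2 * I * τ * thetaTwo (2 * τ) ^ 2 * neg_one_pow_sq ℂ j

end ThetaDecomposition

theorem stmt19_general :
    (∀ (j : ℕ) (τ : ℂ), 0 < τ.im →
      g₄ j τ ^ 2 = E₄₂ τ - (-1 : ℂ) ^ j * 8 * (η τ * η (4 * τ) / η (2 * τ)) ^ 4) ∧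
    (∀ (j : ℕ) (τ : ℂ), 0 < τ.im → g₄ j τ * g₄ (j + 1) τ = E₄₂' τ) ∧
    (∀ (j : ℕ) (τ : ℂ), 0 < τ.im →
      g₄ j (-1 / (4 * τ)) = (-1 : ℂ) ^ j * 2 * Complex.I * τ * g₄ j τ) :=
  ⟨fun j _ ↦ g₄_sq j, fun j _ ↦ g₄_mul_g₄_succ j, fun j _ ↦ g₄_neg_one_div j⟩

theorem stmt19 :
    (∀ j : ℕ, j < 2 → ∀ τ : ℂ, 0 < τ.im →
      g₄ j τ ^ 2 = E₄₂ τ - (-1 : ℂ) ^ j * 8 * (η τ * η (4 * τ) / η (2 * τ)) ^ 4) ∧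
    (∀ τ : ℂ, 0 < τ.im → g₄ 0 τ * g₄ 1 τ = E₄₂' τ) ∧
    (∀ j : ℕ, j < 2 → ∀ τ : ℂ, 0 < τ.im →
      g₄ j (-1 / (4 * τ)) = (-1 : ℂ) ^ j * 2 * Complex.I * τ * g₄ j τ) := by
  obtain ⟨hsq, hmul, hinv⟩ := stmt19_general
  exact ⟨fun j _ ↦ hsq j, hmul 0, fun j _ ↦ hinv j⟩
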